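/- arXiv:1706.00208 — 3 statements merged into one kernel-verified Lean document; each statement's English description precedes it below -/
import Mathlib

section
/- Let p be a prime, k a perfect field of characteristic p, n ≥ 1, and E = 𝕎(k)⟦u_1, …, u_{n−1}⟧, with the convention u_0 = p. For 0 ≤ t < n, set I_t = (u_0, u_1, …, u_{t−1}) ⊂ E and let L_t be the I_t-adic completion of the localization E[u_t^{−1}]. Then L_t is a Noetherian ring and a normal domain, i.e., an integral domain integrally closed in its field of fractions. (This ring is the coefficient ring π₀L_{K(t)}E_n of the localization of Morava E-theory at Morava K-theory.) -/
/-- The generators of Morava `E`-theory: `u 0 = p` and `u j = X (j - 1)` for `1 ≤ j ≤ n - 1`,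
as elements of `E = 𝕎(k)⟦u_1, …, u_{n-1}⟧`. -/
noncomputable def MoravaGen (p : ℕ) [Fact p.Prime] (k : Type*) [CommRing k] (n : ℕ) (j : ℕ) :
    MvPowerSeries (Fin (n - 1)) (WittVector p k) :=
  if j = 0 then (p : MvPowerSeries (Fin (n - 1)) (WittVector p k))
  else if h : j - 1 < n - 1 then MvPowerSeries.X ⟨j - 1, h⟩ else 0

namespace MoravaAux
open nonZeroDivisors

theorem dvd_of_almost {R : Type*} [CommRing R] [IsDomain R] [IsNoetherianRing R]
    [IsIntegrallyClosed R] {a b d : R} (ha : a ≠ 0) (hd : d ≠ 0)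
    (h : ∀ n : ℕ, a ^ n ∣ d * b ^ n) : a ∣ b := by
  let K := FractionRing R
  have haK : algebraMap R K a ≠ 0 := by simpa using ha
  have hs : IsAlmostIntegral R (algebraMap R K b / algebraMap R K a) := by
    refine ⟨d, mem_nonZeroDivisors_of_ne_zero hd, fun n => ?_⟩
    obtain ⟨c, hc⟩ := h n
    refine ⟨c, ?_⟩
    rw [Algebra.smul_def, div_pow, ← mul_div_assoc, eq_div_iff (pow_ne_zero _ haK),
      ← map_pow, ← map_pow, ← map_mul, ← map_mul, hc, mul_comm]
  obtain ⟨y, hy⟩ := IsIntegrallyClosed.isIntegral_iff.mp hs.isIntegral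
  refine ⟨y, ?_⟩
  apply FaithfulSMul.algebraMap_injective R K
  rw [map_mul, hy, mul_div_cancel₀ _ haK]

theorem isIntegrallyClosed_of_dvd {R : Type*} [CommRing R] [IsDomain R]
    (H : ∀ a b d : R, a ≠ 0 → d ≠ 0 → (∀ n : ℕ, a ^ n ∣ d * b ^ n) → a ∣ b) :
    IsIntegrallyClosed R := by
  let K := FractionRing R
  refine (isIntegrallyClosed_iff K).mpr fun {x} hx => ?_
  obtain ⟨d, hd, hdn⟩ := hx.isAlmostIntegral
  obtain ⟨b, a, ha, rfl⟩ := IsFractionRing.div_surjective (A := R) x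
  have ha0 := nonZeroDivisors.ne_zero ha
  have haK : algebraMap R K a ≠ 0 := by simpa using ha0
  obtain ⟨c, hc⟩ := H a b d ha0 (nonZeroDivisors.ne_zero hd) (fun n => by
    obtain ⟨c, hc⟩ := hdn n
    refine ⟨c, ?_⟩
    apply FaithfulSMul.algebraMap_injective R K
    rw [Algebra.smul_def, div_pow, ← mul_div_assoc, eq_div_iff (pow_ne_zero _ haK)] at hc
    simp only [map_mul, map_pow]
    rw [← hc, mul_comm])
  exact ⟨c, by rw [hc, map_mul, mul_div_cancel_left₀ _ haK]⟩

/-- Lifting normality along a regular element of the Jacobson radical. -/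
theorem normal_of_quot {R S : Type*} [CommRing R] [IsNoetherianRing R] [CommRing S]
    [IsDomain S] [IsIntegrallyClosed S] (φ : R →+* S) (hφ : Function.Surjective φ) (x : R)
    (hker : RingHom.ker φ = Ideal.span {x}) (hx : x ∈ Ideal.jacobson (⊥ : Ideal R))
    (hreg : ∀ f, x * f = 0 → f = 0) : IsDomain R ∧ IsIntegrallyClosed R := by
  have hS : IsNoetherianRing S := isNoetherianRing_of_surjective R S φ hφ
  have hle : Ideal.span {x} ≤ Ideal.jacobson (⊥ : Ideal R) := by
    rwa [Ideal.span_singleton_le_iff_mem]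
  have hk : ∀ f, φ f = 0 ↔ x ∣ f := fun f => by
    rw [← RingHom.mem_ker, hker, Ideal.mem_span_singleton]
  have hregn : ∀ n f, x ^ n * f = 0 → f = 0 := by
    intro n
    induction n with
    | zero => intro f; simp
    | succ n ih => intro f hf; exact ih f (hreg _ (by rw [← hf]; ring))
  have hcan : ∀ n f g, x ^ n * f = x ^ n * g → f = g := fun n f g h =>
    sub_eq_zero.mp (hregn n _ (by rw [mul_sub, h, sub_self]))
  have hnt : Nontrivial R := φ.domain_nontrivial
  have hdec : ∀ a : R, a ≠ 0 → ∃ r a', a = x ^ r * a' ∧ φ a' ≠ 0 := by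
    intro a ha
    have : FiniteMultiplicity x a := by
      by_contra hcon
      apply ha
      have hH : IsHausdorff (Ideal.span {x}) R := IsHausdorff.of_le_jacobson _ _ hle
      refine hH.haus a fun n => ?_
      rw [SModEq.zero, smul_eq_mul, Ideal.mul_top, Ideal.span_singleton_pow,
        Ideal.mem_span_singleton]
      by_contra hn
      exact hcon ⟨n, fun h => hn ((pow_dvd_pow _ n.le_succ).trans h)⟩
    obtain ⟨c, hc, hnd⟩ := this.exists_eq_pow_mul_and_not_dvd
    exact ⟨_, c, hc, fun h => hnd ((hk c).mp h)⟩
  have hdom : IsDomain R := by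
    have : NoZeroDivisors R := ⟨by
      intro a b hab
      by_contra! hcon
      obtain ⟨r, a', ha, ha'⟩ := hdec a hcon.1
      obtain ⟨s, b', hb, hb'⟩ := hdec b hcon.2
      have : a' * b' = 0 := hregn (r + s) _ (by rw [← hab, ha, hb]; ring)
      have := congrArg φ this
      rw [map_mul, map_zero] at this
      exact (mul_ne_zero ha' hb') this⟩
    exact NoZeroDivisors.to_isDomain R
  refine ⟨hdom, isIntegrallyClosed_of_dvd ?_⟩
  intro a b d ha hd h
  obtain ⟨r, a', ha1, ha'⟩ := hdec a ha
  obtain ⟨q, d', hd1, hd'⟩ := hdec d hd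
  have step : ∀ b : R, (∀ n : ℕ, a ^ n ∣ d * b ^ n) → ∀ m, x ^ m ∣ b →
      ∃ c, x ^ (m + 1) ∣ b - a * c := by
    intro b hb m hm
    rcases eq_or_ne b 0 with rfl | hb0
    · exact ⟨0, by simp⟩
    obtain ⟨s, b', hb1, hb'⟩ := hdec b hb0
    have hms : m ≤ s := by
      by_contra! hcon
      obtain ⟨e, he⟩ := (pow_dvd_pow x (Nat.succ_le_of_lt hcon)).trans hm
      have : b' = x * e := hcan s _ _ (by rw [← hb1, he, pow_succ]; ring)
      exact hb' ((hk _).mpr ⟨e, this⟩)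
    have key : ∀ n, ∃ c, x ^ (q + n * s) * (d' * b' ^ n) = x ^ (n * r) * (a' ^ n * c) := by
      intro n
      obtain ⟨c, hc⟩ := hb n
      refine ⟨c, ?_⟩
      have e1 : d * b ^ n = x ^ (q + n * s) * (d' * b' ^ n) := by
        rw [hd1, hb1, mul_pow, ← pow_mul, pow_add, mul_comm n s]; ring
      have e2 : a ^ n * c = x ^ (n * r) * (a' ^ n * c) := by
        rw [ha1, mul_pow, ← pow_mul, mul_comm n r]; ring
      rw [← e1, ← e2, hc]
    have hle' : ∀ n, n * r ≤ q + n * s := by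
      intro n
      by_contra! hcon
      obtain ⟨c, hc⟩ := key n
      obtain ⟨j, hj⟩ := Nat.exists_eq_add_of_lt hcon
      have : d' * b' ^ n = x * (x ^ j * (a' ^ n * c)) := hcan (q + n * s) _ _ (by
        rw [hc, hj, pow_succ, pow_add]; ring)
      have := (hk _).mpr ⟨_, this⟩
      rw [map_mul, map_pow] at this
      exact mul_ne_zero hd' (pow_ne_zero _ hb') this
    have hrs : r ≤ s := by
      by_contra! hcon
      have := hle' (q + 1)
      nlinarith
    have hdv : φ a' ∣ φ b' := by
      refine dvd_of_almost ha' hd' fun n => ?_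
      obtain ⟨c, hc⟩ := key n
      obtain ⟨j, hj⟩ := Nat.exists_eq_add_of_le (hle' n)
      have h1 : a' ^ n * c = x ^ j * (d' * b' ^ n) := hcan (n * r) _ _ (by
        rw [← hc, hj, pow_add]; ring)
      -- divide `c` by `x ^ j`
      have h2 : ∀ j (c e : R), a' ^ n * c = x ^ j * e → a' ^ n ∣ e := by
        intro j
        induction j with
        | zero => intro c e h; exact ⟨c, by rw [h]; simp⟩
        | succ j ih =>
          intro c e h
          have : φ (a' ^ n * c) = 0 := (hk _).mpr ⟨x ^ j * e, by rw [h]; ring⟩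
          rw [map_mul, map_pow] at this
          have hc0 := (mul_eq_zero.mp this).resolve_left (pow_ne_zero _ ha')
          obtain ⟨c', rfl⟩ := (hk _).mp hc0
          exact ih c' e (hcan 1 _ _ (by rw [pow_one]; linear_combination h))
      have h3 := map_dvd φ (h2 j c _ h1)
      simpa using h3
    obtain ⟨c0, hc0⟩ := hdv
    obtain ⟨c, rfl⟩ := hφ c0
    have : φ (b' - a' * c) = 0 := by rw [map_sub, map_mul, hc0, sub_self]
    obtain ⟨e, he⟩ := (hk _).mp this
    refine ⟨x ^ (s - r) * c, (pow_dvd_pow x (show m + 1 ≤ s + 1 by omega)).trans ⟨e, ?_⟩⟩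
    obtain ⟨j, rfl⟩ := Nat.exists_eq_add_of_le hrs
    rw [hb1, ha1, Nat.add_sub_cancel_left]
    have : b' = a' * c + x * e := by linear_combination he
    rw [this]; ring
  have all : ∀ m, ∃ c, x ^ m ∣ b - a * c := by
    intro m
    induction m with
    | zero => exact ⟨0, by simp⟩
    | succ m ih =>
      obtain ⟨c, hc⟩ := ih
      obtain ⟨c', hc'⟩ := step (b - a * c) (fun n => by
        rw [sub_eq_add_neg, add_pow, Finset.mul_sum]
        refine Finset.dvd_sum fun k hk' => ?_
        obtain ⟨e, he⟩ := h k
        have hkn : k ≤ n := Nat.lt_succ_iff.mp (Finset.mem_range.mp hk')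
        refine ⟨e * (-c) ^ (n - k) * (n.choose k : R), ?_⟩
        obtain ⟨j, rfl⟩ := Nat.exists_eq_add_of_le hkn
        rw [Nat.add_sub_cancel_left, pow_add]
        have : (-(a * c)) ^ j = a ^ j * (-c) ^ j := by rw [← mul_pow]; ring
        rw [this]
        linear_combination (a ^ j * (-c) ^ j * ((k + j).choose k : R)) * he) m hc
      exact ⟨c + c', by convert hc' using 1; ring⟩
  have hH : IsHausdorff (Ideal.span {x}) (R ⧸ Ideal.span {a}) :=
    IsHausdorff.of_le_jacobson _ _ hle
  rw [← Ideal.mem_span_singleton, ← Ideal.Quotient.eq_zero_iff_mem]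
  refine hH.haus _ fun n => ?_
  obtain ⟨c, e, hc⟩ := all n
  rw [SModEq.zero]
  have : Ideal.Quotient.mk (Ideal.span {a}) b = x ^ n • Ideal.Quotient.mk (Ideal.span {a}) e := by
    rw [Algebra.smul_def, Ideal.Quotient.algebraMap_eq, ← map_mul, ← hc, Ideal.Quotient.eq,
      Ideal.mem_span_singleton]
    exact ⟨c, by ring⟩
  rw [this]
  exact Submodule.smul_mem_smul (Ideal.pow_mem_pow (Ideal.mem_span_singleton_self x) n)
    Submodule.mem_top

theorem normal_equiv {R S : Type*} [CommRing R] [CommRing S] (e : R ≃+* S)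
    (h : IsDomain R ∧ IsIntegrallyClosed R) : IsDomain S ∧ IsIntegrallyClosed S := by
  obtain ⟨_, _⟩ := h
  exact ⟨e.symm.toMulEquiv.isDomain R, IsIntegrallyClosed.of_equiv e⟩

/-- The ideal generated by the first `j` terms of a sequence. -/
def seqIdeal {R : Type*} [CommRing R] (u : ℕ → R) (j : ℕ) : Ideal R :=
  Ideal.span (u '' Set.Iio j)

theorem seqIdeal_zero {R : Type*} [CommRing R] (u : ℕ → R) : seqIdeal u 0 = ⊥ := by
  simp [seqIdeal]

theorem seqIdeal_succ {R : Type*} [CommRing R] (u : ℕ → R) (j : ℕ) :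
    seqIdeal u (j + 1) = seqIdeal u j ⊔ Ideal.span {u j} := by
  rw [seqIdeal, seqIdeal, ← Ideal.span_union]
  congr 1
  have : Set.Iio (j + 1) = Set.Iio j ∪ {j} := by ext; simp
  rw [this, Set.image_union, Set.image_singleton]

theorem seqIdeal_map {R S : Type*} [CommRing R] [CommRing S] (f : R →+* S) (u : ℕ → R) (j : ℕ) :
    (seqIdeal u j).map f = seqIdeal (fun i => f (u i)) j := by
  rw [seqIdeal, seqIdeal, Ideal.map_span, Set.image_image]

theorem seqIdeal_eq_ofList {R : Type*} [CommRing R] (u : ℕ → R) (j : ℕ) :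
    Ideal.ofList ((List.range j).map u) = seqIdeal u j := by
  rw [seqIdeal, Ideal.ofList]
  congr 1
  ext; simp

theorem seq_regular_iff {R : Type*} [CommRing R] (u : ℕ → R) (t : ℕ) :
    RingTheory.Sequence.IsWeaklyRegular R ((List.range t).map u) ↔
      ∀ j < t, ∀ f, u j * f ∈ seqIdeal u j → f ∈ seqIdeal u j := by
  rw [RingTheory.Sequence.isWeaklyRegular_iff]
  have key : ∀ j, j < t → ((List.range t).map u).take j = (List.range j).map u := by
    intro j hj
    rw [← List.map_take, List.take_range, min_eq_left hj.le]
  constructor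
  · intro h j hj f hf
    have := h j (by simpa using hj)
    rw [isSMulRegular_quotient_iff_mem_of_smul_mem, key j hj, seqIdeal_eq_ofList, smul_eq_mul,
      Ideal.mul_top] at this
    exact this f (by simpa using hf)
  · intro h j hj
    have hj' : j < t := by simpa using hj
    rw [isSMulRegular_quotient_iff_mem_of_smul_mem, key j hj', seqIdeal_eq_ofList, smul_eq_mul,
      Ideal.mul_top]
    intro f hf
    exact h j hj' f (by simpa using hf)

theorem seq_regular_flat {R S : Type*} [CommRing R] [CommRing S] [Algebra R S] [Module.Flat R S]
    (u : ℕ → R) (t : ℕ) (h : ∀ j < t, ∀ f, u j * f ∈ seqIdeal u j → f ∈ seqIdeal u j) :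
    ∀ j < t, ∀ f, algebraMap R S (u j) * f ∈ seqIdeal (fun i => algebraMap R S (u i)) j →
      f ∈ seqIdeal (fun i => algebraMap R S (u i)) j := by
  have := ((seq_regular_iff u t).mpr h).of_flat (S := S)
  rw [List.map_map] at this
  exact (seq_regular_iff (fun i => algebraMap R S (u i)) t).mp this

theorem seq_normal {R : Type*} [CommRing R] [IsNoetherianRing R] (u : ℕ → R) (t : ℕ)
    (hjac : ∀ j < t, u j ∈ Ideal.jacobson (⊥ : Ideal R))
    (hreg : ∀ j < t, ∀ f, u j * f ∈ seqIdeal u j → f ∈ seqIdeal u j)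
    (h : IsDomain (R ⧸ seqIdeal u t) ∧ IsIntegrallyClosed (R ⧸ seqIdeal u t)) (j : ℕ)
    (hj : j ≤ t) :
    IsDomain (R ⧸ seqIdeal u j) ∧ IsIntegrallyClosed (R ⧸ seqIdeal u j) := by
  induction hj using Nat.decreasingInduction with
  | self => exact h
  | of_succ j hj ih =>
    obtain ⟨_, _⟩ := ih
    have hle : seqIdeal u j ≤ seqIdeal u (j + 1) := by rw [seqIdeal_succ]; exact le_sup_left
    refine normal_of_quot (Ideal.Quotient.factor hle) (Ideal.Quotient.factor_surjective hle)
      (Ideal.Quotient.mk _ (u j)) ?_ ?_ ?_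
    · rw [Ideal.Quotient.factor_ker, seqIdeal_succ, Ideal.map_sup, Ideal.map_quotient_self,
        bot_sup_eq, Ideal.map_span, Set.image_singleton]
    · have := hjac j hj
      rw [Ideal.mem_jacobson_bot] at this ⊢
      intro y
      obtain ⟨y, rfl⟩ := Ideal.Quotient.mk_surjective y
      simpa using (this y).map (Ideal.Quotient.mk (seqIdeal u j))
    · intro f hf
      obtain ⟨f, rfl⟩ := Ideal.Quotient.mk_surjective f
      rw [← map_mul, Ideal.Quotient.eq_zero_iff_mem] at hf
      exact Ideal.Quotient.eq_zero_iff_mem.mpr (hreg j hj f hf)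

theorem normal_localization_quot {E A : Type*} [CommRing E] [CommRing A] [Algebra E A] (x : E)
    [IsLocalization.Away x A] (I : Ideal E) (hx : x ∉ I)
    (h : IsDomain (E ⧸ I) ∧ IsIntegrallyClosed (E ⧸ I)) :
    IsDomain (A ⧸ I.map (algebraMap E A)) ∧ IsIntegrallyClosed (A ⧸ I.map (algebraMap E A)) := by
  obtain ⟨_, _⟩ := h
  let g : E ⧸ I →+* A ⧸ I.map (algebraMap E A) :=
    Ideal.quotientMap _ (algebraMap E A) Ideal.le_comap_map
  let _ : Algebra (E ⧸ I) (A ⧸ I.map (algebraMap E A)) := g.toAlgebra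
  have hloc : IsLocalization ((Submonoid.powers x).map (Ideal.Quotient.mk I))
      (A ⧸ I.map (algebraMap E A)) :=
    IsLocalization.of_surjective (S := A) (Submonoid.powers x) (Ideal.Quotient.mk I)
      Ideal.Quotient.mk_surjective
      (Ideal.Quotient.mk (I.map (algebraMap E A))) Ideal.Quotient.mk_surjective
      (by ext; rfl) (by simp)
  have hM : (Submonoid.powers x).map (Ideal.Quotient.mk I) ≤ (E ⧸ I)⁰ := by
    rintro _ ⟨_, ⟨n, rfl⟩, rfl⟩
    apply mem_nonZeroDivisors_of_ne_zero
    change Ideal.Quotient.mk I (x ^ n) ≠ 0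
    rw [map_pow]
    exact pow_ne_zero _ (fun h => hx (Ideal.Quotient.eq_zero_iff_mem.mp h))
  exact ⟨IsLocalization.isDomain_of_le_nonZeroDivisors _ hM,
    isIntegrallyClosed_of_isLocalization _ _ hM⟩

/-- Adic completions of Noetherian rings are Noetherian. -/
theorem noetherian_completion {A : Type*} [CommRing A] [IsNoetherianRing A] (I : Ideal A) :
    IsNoetherianRing (AdicCompletion I A) := by
  obtain ⟨s, hs⟩ := IsNoetherian.noetherian I
  let J := MvPolynomial.idealOfVars s A
  let e : MvPolynomial s A →+* A := (MvPolynomial.aeval (fun i : s => (i : A))).toRingHom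
  have he : Function.Surjective e := fun a => ⟨MvPolynomial.C a, by simp [e]⟩
  have hJ : J.map e = I := by
    rw [← hs]
    simp only [J, MvPolynomial.idealOfVars, Ideal.map_span, ← Set.range_comp]
    congr 1
    ext; simp [e]
  have hJn : ∀ n, (J ^ n).map e = I ^ n := fun n => by rw [Ideal.map_pow, hJ]
  have hJc : ∀ n, J ^ n ≤ (I ^ n).comap e := fun n => Ideal.map_le_iff_le_comap.mp (hJn n).le
  let f : ∀ n, AdicCompletion J (MvPolynomial s A) →+* A ⧸ I ^ n := fun n =>
    (Ideal.quotientMap (I ^ n) e (hJc n)).comp (AdicCompletion.evalₐ J n).toRingHom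
  have hf : ∀ {m n : ℕ} (hle : m ≤ n), (Ideal.Quotient.factorPow I hle).comp (f n) = f m := by
    intro m n hle
    ext x
    obtain ⟨r, rfl⟩ := AdicCompletion.mk_surjective J _ x
    have h1 := AdicCompletion.Ideal.mk_eq_mk J hle r
    have h2 := congrArg (Ideal.quotientMap (I ^ m) e (hJc m)) h1
    simp only [Ideal.quotientMap_mk] at h2
    simp only [f, RingHom.comp_apply, AlgHom.toRingHom_eq_coe, RingHom.coe_coe,
      AdicCompletion.evalₐ_mk, Ideal.quotientMap_mk]
    exact h2
  let F := AdicCompletion.liftRingHom I f hf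
  have hF : Function.Surjective F := by
    intro y
    obtain ⟨a, rfl⟩ := AdicCompletion.mk_surjective I _ y
    have hc : ∀ n, ∃ c ∈ J ^ n, e c = a.val (n + 1) - a.val n := by
      intro n
      have h1 := AdicCompletion.Ideal.mk_eq_mk I n.le_succ a
      rw [Ideal.Quotient.eq, ← hJn n] at h1
      exact (Ideal.mem_map_iff_of_surjective e he).mp h1
    choose c hcJ hce using hc
    obtain ⟨c0, hc0⟩ := he (a.val 0)
    let b : ℕ → MvPolynomial s A := fun n => c0 + ∑ i ∈ Finset.range n, c i
    have hb : ∀ n, e (b n) = a.val n := by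
      intro n
      induction n with
      | zero => simp [b, hc0]
      | succ n ih =>
        have : b (n + 1) = b n + c n := by simp only [b, Finset.sum_range_succ]; ring
        rw [this, map_add, ih, hce]; ring
    let B : AdicCompletion.AdicCauchySequence J (MvPolynomial s A) :=
      AdicCompletion.AdicCauchySequence.mk J _ b (fun n => by
        rw [SModEq.sub_mem, smul_eq_mul, Ideal.mul_top]
        have : b n - b (n + 1) = - c n := by simp only [b, Finset.sum_range_succ]; ring
        rw [this]
        exact neg_mem (hcJ n))
    refine ⟨AdicCompletion.mk J _ B, AdicCompletion.ext_evalₐ fun n => ?_⟩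
    rw [AdicCompletion.evalₐ_liftRingHom]
    simp only [f, RingHom.comp_apply, AlgHom.toRingHom_eq_coe, RingHom.coe_coe,
      AdicCompletion.evalₐ_mk, Ideal.quotientMap_mk]
    exact congrArg _ (hb n)
  have e1 := (MvPowerSeries.toAdicCompletionAlgEquiv s A).toRingEquiv
  have : IsNoetherianRing (AdicCompletion J (MvPolynomial s A)) :=
    isNoetherianRing_of_ringEquiv _ e1
  exact isNoetherianRing_of_surjective _ _ F hF

theorem completion_normal {A : Type*} [CommRing A] [IsNoetherianRing A] (u : ℕ → A) (t : ℕ)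
    (hreg : ∀ j < t, ∀ f, u j * f ∈ seqIdeal u j → f ∈ seqIdeal u j)
    (h : IsDomain (A ⧸ seqIdeal u t) ∧ IsIntegrallyClosed (A ⧸ seqIdeal u t)) :
    IsDomain (AdicCompletion (seqIdeal u t) A) ∧
      IsIntegrallyClosed (AdicCompletion (seqIdeal u t) A) := by
  let I := seqIdeal u t
  let C := AdicCompletion I A
  have hfg : I.FG := IsNoetherian.noetherian I
  have : IsNoetherianRing C := noetherian_completion I
  let v : ℕ → C := fun i => algebraMap A C (u i)
  have hI : seqIdeal v t = I.map (algebraMap A C) := (seqIdeal_map _ _ _).symm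
  have hcomp : IsAdicComplete (I.map (algebraMap A C)) C :=
    AdicCompletion.isAdicComplete_self I hfg
  have hjac : ∀ j < t, v j ∈ Ideal.jacobson (⊥ : Ideal C) := fun j hj =>
    IsAdicComplete.le_jacobson_bot (I.map (algebraMap A C)) (by
      rw [← hI]; exact Ideal.subset_span ⟨j, hj, rfl⟩)
  have e : (A ⧸ I) ≃+* C ⧸ seqIdeal v t :=
    ((Ideal.quotEquivOfEq (hI.trans (AdicCompletion.ker_evalOneₐ_eq_map I hfg).symm)).trans
      (RingHom.quotientKerEquivOfSurjective
        (f := (AdicCompletion.evalOneₐ I).toRingHom) (AdicCompletion.evalOneₐ_surjective I))).symm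
  have := seq_normal v t hjac (seq_regular_flat u t hreg) (normal_equiv e h) 0 (Nat.zero_le _)
  rw [seqIdeal_zero] at this
  exact normal_equiv (RingEquiv.quotientBot C) this
section Morava

variable (p : ℕ) [Fact p.Prime] (k : Type*) [Field k] (n : ℕ)

theorem gen_zero : MoravaGen p k n 0 = MvPowerSeries.C (p : WittVector p k) := by
  simp [MoravaGen]

theorem gen_succ (j : ℕ) (h : j < n - 1) : MoravaGen p k n (j + 1) = MvPowerSeries.X ⟨j, h⟩ := by
  simp [MoravaGen, h]

theorem mem_seqIdeal (j : ℕ) (hj : j < n) (f : MvPowerSeries (Fin (n - 1)) (WittVector p k)) :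
    f ∈ seqIdeal (MoravaGen p k n) (j + 1) ↔
      ∀ m : Fin (n - 1) →₀ ℕ, (∀ i : Fin (n - 1), i.val < j → m i = 0) →
        (p : WittVector p k) ∣ MvPowerSeries.coeff m f := by
  induction j generalizing f with
  | zero =>
    rw [seqIdeal_succ, seqIdeal_zero, bot_sup_eq, Ideal.mem_span_singleton, gen_zero]
    constructor
    · rintro ⟨g, rfl⟩ m -
      rw [MvPowerSeries.coeff_C_mul]
      exact dvd_mul_right _ _
    · intro h
      choose g hg using fun m => h m (by simp)
      let G : MvPowerSeries (Fin (n - 1)) (WittVector p k) := g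
      have hG : ∀ m, MvPowerSeries.coeff m G = g m := fun m => rfl
      refine ⟨G, ?_⟩
      ext1 m
      rw [MvPowerSeries.coeff_C_mul, hg m, hG]
  | succ j ih =>
    have hj' : j < n - 1 := by omega
    rw [seqIdeal_succ, gen_succ p k n j hj']
    constructor
    · intro h m hm
      obtain ⟨g, hg, y, hy, rfl⟩ := Submodule.mem_sup.mp h
      rw [map_add, MvPowerSeries.X_dvd_iff.mp (Ideal.mem_span_singleton.mp hy) m
        (hm ⟨j, hj'⟩ (by simp)), add_zero]
      exact (ih (by omega) g).mp hg m (fun i hi => hm i (by omega))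
    · intro h
      let g : MvPowerSeries (Fin (n - 1)) (WittVector p k) :=
        fun m => if m ⟨j, hj'⟩ = 0 then MvPowerSeries.coeff m f else 0
      have hgc : ∀ m, MvPowerSeries.coeff m g =
        if m ⟨j, hj'⟩ = 0 then MvPowerSeries.coeff m f else 0 := fun m => rfl
      refine Submodule.mem_sup.mpr ⟨g, ?_, f - g, ?_, by ring⟩
      · rw [ih (by omega)]
        intro m hm
        rw [hgc]
        split_ifs with h0
        · refine h m fun i hi => ?_
          rcases Nat.lt_succ_iff_lt_or_eq.mp hi with h1 | h1
          · exact hm i h1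
          · have : i = ⟨j, hj'⟩ := Fin.ext h1
            rw [this, h0]
        · exact dvd_zero _
      · rw [Ideal.mem_span_singleton, MvPowerSeries.X_dvd_iff]
        intro m hm
        rw [map_sub, hgc, if_pos hm, sub_self]

variable [CharP k p] [PerfectField k]

theorem p_irred : Irreducible (p : WittVector p k) := by
  have : ExpChar k p := ExpChar.prime Fact.out
  exact WittVector.irreducible p

theorem dvr : IsDiscreteValuationRing (WittVector p k) := by
  have : ExpChar k p := ExpChar.prime Fact.out
  infer_instance

theorem gen_regular (j : ℕ) (hj : j < n) (f : MvPowerSeries (Fin (n - 1)) (WittVector p k))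
    (h : MoravaGen p k n j * f ∈ seqIdeal (MoravaGen p k n) j) :
    f ∈ seqIdeal (MoravaGen p k n) j := by
  cases j with
  | zero =>
    have := dvr p k
    rw [seqIdeal_zero, Ideal.mem_bot] at h ⊢
    rw [gen_zero] at h
    ext1 m
    have := congrArg (MvPowerSeries.coeff m) h
    rw [MvPowerSeries.coeff_C_mul, map_zero] at this
    rw [map_zero]
    exact (mul_eq_zero.mp this).resolve_left (p_irred p k).ne_zero
  | succ j =>
    have hj' : j < n - 1 := by omega
    rw [gen_succ p k n j hj', mem_seqIdeal p k n j (by omega)] at h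
    rw [mem_seqIdeal p k n j (by omega)]
    intro m hm
    have := h (Finsupp.single ⟨j, hj'⟩ 1 + m) (fun i hi => by
      have : (⟨j, hj'⟩ : Fin (n - 1)) ≠ i := by rintro rfl; simp at hi
      simp [Finsupp.single_apply, this, hm i hi])
    rwa [MvPowerSeries.X, MvPowerSeries.coeff_add_monomial_mul, one_mul] at this

theorem gen_notMem (j : ℕ) (hj : j < n) :
    MoravaGen p k n j ∉ seqIdeal (MoravaGen p k n) j := by
  cases j with
  | zero =>
    rw [seqIdeal_zero, Ideal.mem_bot, gen_zero]
    intro h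
    have := congrArg MvPowerSeries.constantCoeff h
    rw [MvPowerSeries.constantCoeff_C, map_zero] at this
    exact (p_irred p k).ne_zero this
  | succ j =>
    have hj' : j < n - 1 := by omega
    rw [gen_succ p k n j hj', mem_seqIdeal p k n j (by omega)]
    intro h
    have := h (Finsupp.single ⟨j, hj'⟩ 1) (fun i hi => by
      have : (⟨j, hj'⟩ : Fin (n - 1)) ≠ i := by rintro rfl; simp at hi
      simp [Finsupp.single_apply, this])
    rw [MvPowerSeries.coeff_index_single_self_X] at this
    exact (p_irred p k).not_isUnit (isUnit_of_dvd_one this)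

theorem gen_jacobson (j : ℕ) (hj : j < n) : MoravaGen p k n j ∈
    Ideal.jacobson (⊥ : Ideal (MvPowerSeries (Fin (n - 1)) (WittVector p k))) := by
  have := dvr p k
  rw [IsLocalRing.jacobson_eq_maximalIdeal _ bot_ne_top, IsLocalRing.mem_maximalIdeal,
    mem_nonunits_iff]
  intro h
  have h := h.map MvPowerSeries.constantCoeff
  cases j with
  | zero =>
    rw [gen_zero, MvPowerSeries.constantCoeff_C] at h
    exact (p_irred p k).not_isUnit h
  | succ j =>
    rw [gen_succ p k n j (by omega), MvPowerSeries.constantCoeff_X] at h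
    exact not_isUnit_zero h

theorem gen_maximal (hn : 1 ≤ n) : (seqIdeal (MoravaGen p k n) n).IsMaximal := by
  have := dvr p k
  have hmax : (Ideal.span {(p : WittVector p k)}).IsMaximal :=
    PrincipalIdealRing.isMaximal_of_irreducible (p_irred p k)
  have : seqIdeal (MoravaGen p k n) n = (Ideal.span {(p : WittVector p k)}).comap
      (MvPowerSeries.constantCoeff (σ := Fin (n - 1)) (R := WittVector p k)) := by
    obtain ⟨N, rfl⟩ := Nat.exists_eq_add_of_le' hn
    ext f
    rw [mem_seqIdeal p k _ N (by omega), Ideal.mem_comap, Ideal.mem_span_singleton]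
    constructor
    · intro h; exact h 0 (by simp)
    · intro h m hm
      have : m = 0 := by
        ext i
        exact hm i (by omega)
      rw [this]; exact h
  rw [this]
  exact Ideal.comap_isMaximal_of_surjective _ fun a => ⟨MvPowerSeries.C a, by simp⟩

end Morava
end MoravaAux


/-- The ring `L_t = π₀ L_{K(t)} E_n`, i.e. the `I_t`-adic completion of `E[u_t⁻¹]` where
`E = 𝕎(k)⟦u_1, …, u_{n-1}⟧` and `I_t = (u_0, …, u_{t-1})` with `u_0 = p`, is a Noetherian
integrally closed integral domain. -/
theorem Lt_is_noetherian_normal_domain (p : ℕ) [Fact p.Prime] (k : Type*) [Field k]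
    [CharP k p] [PerfectField k] (n : ℕ) (hn : 1 ≤ n) (t : ℕ) (ht : t < n) :
    IsNoetherianRing
      (AdicCompletion
        (Ideal.map
          (algebraMap (MvPowerSeries (Fin (n - 1)) (WittVector p k))
            (Localization.Away (MoravaGen p k n t)))
          (Ideal.span (MoravaGen p k n '' Set.Iio t)))
        (Localization.Away (MoravaGen p k n t))) ∧
    IsDomain
      (AdicCompletion
        (Ideal.map
          (algebraMap (MvPowerSeries (Fin (n - 1)) (WittVector p k))
            (Localization.Away (MoravaGen p k n t)))
          (Ideal.span (MoravaGen p k n '' Set.Iio t)))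
        (Localization.Away (MoravaGen p k n t))) ∧
    IsIntegrallyClosed
      (AdicCompletion
        (Ideal.map
          (algebraMap (MvPowerSeries (Fin (n - 1)) (WittVector p k))
            (Localization.Away (MoravaGen p k n t)))
          (Ideal.span (MoravaGen p k n '' Set.Iio t)))
        (Localization.Away (MoravaGen p k n t))) := by
  have := MoravaAux.dvr p k
  have hEnoeth : IsNoetherianRing (MvPowerSeries (Fin (n - 1)) (WittVector p k)) := inferInstance
  have hAnoeth : IsNoetherianRing (Localization.Away (MoravaGen p k n t)) :=
    IsLocalization.isNoetherianRing (Submonoid.powers (MoravaGen p k n t)) _ hEnoeth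
  have hflat : Module.Flat (MvPowerSeries (Fin (n - 1)) (WittVector p k))
      (Localization.Away (MoravaGen p k n t)) :=
    IsLocalization.flat _ (Submonoid.powers (MoravaGen p k n t))
  have hmax := MoravaAux.gen_maximal p k n hn
  have hfield : IsDomain (_ ⧸ MoravaAux.seqIdeal (MoravaGen p k n) n) ∧
      IsIntegrallyClosed (_ ⧸ MoravaAux.seqIdeal (MoravaGen p k n) n) := by
    letI := Ideal.Quotient.field (MoravaAux.seqIdeal (MoravaGen p k n) n)
    exact ⟨inferInstance, inferInstance⟩
  have hE := MoravaAux.seq_normal (MoravaGen p k n) n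
    (fun j hj => MoravaAux.gen_jacobson p k n j hj)
    (fun j hj f => MoravaAux.gen_regular p k n j hj f) hfield t ht.le
  have hA := MoravaAux.normal_localization_quot
    (A := Localization.Away (MoravaGen p k n t)) (MoravaGen p k n t) _
    (MoravaAux.gen_notMem p k n t ht) hE
  have hreg := MoravaAux.seq_regular_flat (S := Localization.Away (MoravaGen p k n t))
    (MoravaGen p k n) t (fun j hj f => MoravaAux.gen_regular p k n j (hj.trans ht) f)
  rw [MoravaAux.seqIdeal_map] at hA
  have key : ∀ I : Ideal (Localization.Away (MoravaGen p k n t)),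
      I = MoravaAux.seqIdeal (fun i => algebraMap _ _ (MoravaGen p k n i)) t →
      IsNoetherianRing (AdicCompletion I (Localization.Away (MoravaGen p k n t))) ∧
      IsDomain (AdicCompletion I (Localization.Away (MoravaGen p k n t))) ∧
      IsIntegrallyClosed (AdicCompletion I (Localization.Away (MoravaGen p k n t))) := by
    rintro _ rfl
    exact ⟨MoravaAux.noetherian_completion _, MoravaAux.completion_normal _ t hreg hA⟩
  exact key _ (MoravaAux.seqIdeal_map _ _ _)
end

section
/- Let p be a prime, k a perfect field of characteristic p, n ≥ 1, and E = 𝕎(k)⟦u_1, …, u_{n−1}⟧, with the convention u_0 = p. For 0 ≤ t < n set I_t = (u_0, u_1, …, u_{t−1}) ⊂ E, and let L_t be the I_t-adic completion of E[u_t^{−1}]. For integers 0 ≤ t' ≤ t < n, let L_{t',t} be the I_{t'}·L_t-adic completion of the localization L_t[u_{t'}^{−1}] (where I_{t'}·L_t denotes the ideal of L_t generated by the image of I_{t'}). Then L_{t',t} is a Noetherian ring and a normal domain, i.e., an integral domain integrally closed in its field of fractions. (This ring is the coefficient ring π₀L_{K(t')}L_{K(t)}E_n of the iterated localization of Morava E-theory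 at Morava K-theories.) -/
/-- The ring `L_t = π₀ L_{K(t)} E_n`: the `I_t`-adic completion of `E[u_t⁻¹]`, where
`E = 𝕎(k)⟦u_1, …, u_{n-1}⟧` and `I_t = (u_0, …, u_{t-1})` with `u_0 = p`. -/
noncomputable abbrev MoravaLt (p : ℕ) [Fact p.Prime] (k : Type*) [CommRing k] (n t : ℕ) :=
  AdicCompletion
    (Ideal.map
      (algebraMap (MvPowerSeries (Fin (n - 1)) (WittVector p k))
        (Localization.Away (MoravaGen p k n t)))
      (Ideal.span (MoravaGen p k n '' Set.Iio t)))
    (Localization.Away (MoravaGen p k n t))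

/-- The canonical ring map `E → L_t`. -/
noncomputable def MoravaLtMap (p : ℕ) [Fact p.Prime] (k : Type*) [CommRing k] (n t : ℕ) :
    MvPowerSeries (Fin (n - 1)) (WittVector p k) →+* MoravaLt p k n t :=
  (algebraMap (Localization.Away (MoravaGen p k n t)) (MoravaLt p k n t)).comp
    (algebraMap (MvPowerSeries (Fin (n - 1)) (WittVector p k))
      (Localization.Away (MoravaGen p k n t)))

/-- The ring `L_{t',t} = π₀ L_{K(t')} L_{K(t)} E_n`: the `I_{t'}·L_t`-adic completion of the
localization `L_t[u_{t'}⁻¹]`. -/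
noncomputable abbrev MoravaLtt (p : ℕ) [Fact p.Prime] (k : Type*) [CommRing k]
    (n t' t : ℕ) :=
  AdicCompletion
    (Ideal.map
      ((algebraMap (MoravaLt p k n t)
          (Localization.Away (MoravaLtMap p k n t (MoravaGen p k n t')))).comp
        (MoravaLtMap p k n t))
      (Ideal.span (MoravaGen p k n '' Set.Iio t')))
    (Localization.Away (MoravaLtMap p k n t (MoravaGen p k n t')))


theorem aux_noeth {R : Type*} [CommRing R] [IsNoetherianRing R] (I : Ideal R) :
    IsNoetherianRing (AdicCompletion I R) := by
  have hfg : I.FG := (isNoetherianRing_iff_ideal_fg R).1 inferInstance I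
  obtain ⟨m, a, ha⟩ := Submodule.fg_iff_exists_fin_generating_family.1 hfg
  let ev : MvPolynomial (Fin m) R →+* R := (MvPolynomial.aeval a).toRingHom
  have hJ : (MvPolynomial.idealOfVars (Fin m) R).map ev = I := by
    rw [Ideal.map_span, ← Set.range_comp, ← ha]
    congr 2
    ext i
    simp [ev]
  have hle : ∀ n, MvPolynomial.idealOfVars (Fin m) R ^ n ≤ (I ^ n).comap ev := by
    intro n
    rw [← Ideal.map_le_iff_le_comap, Ideal.map_pow, hJ]
  let f : ∀ n, MvPowerSeries (Fin m) R →+* R ⧸ I ^ n := fun n =>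
    (Ideal.quotientMap (I ^ n) ev (hle n)).comp (MvPowerSeries.truncTotalAlgHom (Fin m) R n).toRingHom
  have hf : ∀ {m n : ℕ} (h : m ≤ n), (Ideal.Quotient.factorPow I h).comp (f n) = f m := by
    intro l n h
    ext x
    simp only [f, RingHom.comp_apply]
    change Ideal.Quotient.mk (I ^ l) (ev _) = Ideal.Quotient.mk (I ^ l) (ev _)
    rw [Ideal.Quotient.eq, ← map_sub]
    exact hle l (MvPowerSeries.truncTotal_sub_truncTotal_mem_pow_idealOfVars h le_rfl _)
  let F := AdicCompletion.liftRingHom I f hf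
  let X' : Ideal (MvPowerSeries (Fin m) R) := Ideal.span (Set.range MvPowerSeries.X)
  have hFc : ∀ q : MvPolynomial (Fin m) R, F (q : MvPowerSeries (Fin m) R) = algebraMap R _ (ev q) := by
    intro q
    apply AdicCompletion.ext_evalₐ
    intro n
    rw [AdicCompletion.evalₐ_liftRingHom]
    simp only [f, RingHom.comp_apply]
    have := (MvPowerSeries.truncTotalAlgHom (Fin m) R n).commutes q
    erw [this]
    rfl
  have hmap : X'.map F = I.map (algebraMap R (AdicCompletion I R)) := by
    have hI2 : ∀ J : Ideal R, Submodule.span R (Set.range a) = J →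
        J.map (algebraMap R (AdicCompletion I R)) =
          Ideal.span (Set.range (algebraMap R (AdicCompletion I R) ∘ a)) := by
      rintro J rfl
      rw [Ideal.submodule_span_eq, Ideal.map_span, ← Set.range_comp]
    rw [hI2 I ha, Ideal.map_span, ← Set.range_comp]
    congr 2
    ext1 i
    have := hFc (MvPolynomial.X i)
    simpa [ev] using this
  have hc : IsAdicComplete (I.map (algebraMap R (AdicCompletion I R))) (AdicCompletion I R) :=
    (IsAdicComplete.map_algebraMap_iff _ _).mpr (AdicCompletion.isAdicComplete hfg)
  have hH : IsHausdorff (X'.map F) (AdicCompletion I R) := by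
    rw [hmap]; infer_instance
  have hs : Function.Surjective F := by
    apply surjective_of_mk_map_comp_surjective (I := X') F
    intro y
    obtain ⟨y, rfl⟩ := Ideal.Quotient.mk_surjective y
    obtain ⟨r, hr⟩ := Ideal.Quotient.mk_surjective (AdicCompletion.evalOneₐ I y)
    refine ⟨(MvPolynomial.C r : MvPolynomial (Fin m) R), ?_⟩
    rw [RingHom.comp_apply, hFc, Ideal.Quotient.eq, hmap, ← AdicCompletion.ker_evalOneₐ_eq_map I hfg,
      RingHom.mem_ker, map_sub, sub_eq_zero]
    have : ev (MvPolynomial.C r) = r := by simp [ev]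
    rw [this]
    exact hr
  exact isNoetherianRing_of_surjective _ _ F hs

section
variable {R S : Type*} [CommRing R] [CommRing S]

/-- every nonzero element is a power of `x` times an element not divisible by `x`. -/
theorem aux_fact [IsNoetherianRing R] (x : R)
    (hj : Ideal.span {x} ≤ Ideal.jacobson ⊥) (a : R) (ha : a ≠ 0) :
    ∃ (m : ℕ) (b : R), a = x ^ m * b ∧ ¬ x ∣ b := by
  by_contra! h
  have H : ∀ m : ℕ, x ^ m ∣ a := by
    intro m
    induction m with
    | zero => simp
    | succ m ih =>
      obtain ⟨b, hb⟩ := ih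
      obtain ⟨c, rfl⟩ := h m b hb
      exact ⟨c, by rw [hb]; ring⟩
  have := Ideal.iInf_pow_smul_eq_bot_of_le_jacobson (M := R) _ hj
  apply ha
  have h2 : a ∈ (⨅ i : ℕ, Ideal.span {x} ^ i • (⊤ : Submodule R R)) := by
    rw [Submodule.mem_iInf]
    intro i
    simpa [Ideal.span_singleton_pow, Ideal.mem_span_singleton] using H i
  rwa [this] at h2

theorem aux_domain [IsNoetherianRing R] [IsDomain S] (φ : R →+* S)
    (x : R) (hk : ∀ a, φ a = 0 ↔ x ∣ a) (hx : IsSMulRegular R x)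
    (hj : Ideal.span {x} ≤ Ideal.jacobson ⊥) : IsDomain R := by
  have : Nontrivial R := φ.domain_nontrivial
  have : NoZeroDivisors R := by
    constructor
    intro a b hab
    by_contra! h
    obtain ⟨m, a', rfl, ha'⟩ := aux_fact x hj a h.1
    obtain ⟨n, b', rfl, hb'⟩ := aux_fact x hj b h.2
    have h1 : x ^ (m + n) • (a' * b') = x ^ (m + n) • 0 := by
      rw [smul_eq_mul, smul_zero, ← hab]; ring
    have h2 := (hx.pow (m + n)) h1
    have h3 := congrArg φ h2
    rw [map_mul, map_zero, mul_eq_zero, hk, hk] at h3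
    tauto
  exact NoZeroDivisors.to_isDomain R

/-- completely integrally closed formulation for noetherian domains. -/
theorem aux_alm [IsDomain S] [IsNoetherianRing S] [IsIntegrallyClosed S] (c g h : S) (hc : c ≠ 0)
    (hg : g ≠ 0) (H : ∀ m : ℕ, g ^ m ∣ c * h ^ m) : g ∣ h := by
  let K := FractionRing S
  have hgK : algebraMap S K g ≠ 0 := by simpa using hg
  have h1 : IsAlmostIntegral S (algebraMap S K h / algebraMap S K g) := by
    refine ⟨c, mem_nonZeroDivisors_of_ne_zero hc, fun m => ?_⟩
    obtain ⟨d, hd⟩ := H m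
    refine ⟨d, ?_⟩
    rw [Algebra.smul_def, div_pow, ← mul_div_assoc, eq_div_iff (pow_ne_zero _ hgK)]
    rw [← map_pow, ← map_pow, ← map_mul, ← map_mul, hd, mul_comm]
  obtain ⟨y, hy⟩ := IsIntegrallyClosed.isIntegral_iff.1 h1.isIntegral
  refine ⟨y, ?_⟩
  rw [eq_div_iff hgK, ← map_mul] at hy
  rw [mul_comm]
  exact (IsFractionRing.injective S K hy).symm

theorem aux_normal [IsNoetherianRing R] [IsDomain S] [IsIntegrallyClosed S] (φ : R →+* S)
    (hφ : Function.Surjective φ)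
    (x : R) (hk : ∀ a, φ a = 0 ↔ x ∣ a) (hx : IsSMulRegular R x)
    (hj : Ideal.span {x} ≤ Ideal.jacobson ⊥) : IsDomain R ∧ IsIntegrallyClosed R := by
  have hR : IsDomain R := aux_domain φ x hk hx hj
  have hS : IsNoetherianRing S := isNoetherianRing_of_surjective _ _ φ hφ
  refine ⟨hR, ?_⟩
  have hx0 : x ≠ 0 := by
    rintro rfl
    have : (0 : R) • (1 : R) = (0 : R) • (0 : R) := by simp
    exact one_ne_zero (hx this)
  have hxp : Prime x := by
    refine ⟨hx0, ?_, ?_⟩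
    · intro hu
      have := (hk 1).2 hu.dvd
      simp at this
    · intro a b hab
      rw [← hk, map_mul, mul_eq_zero, hk, hk] at hab
      exact hab
  have hpow : ∀ (s : ℕ) (g d : R), ¬ x ∣ g → x ^ s ∣ g * d → x ^ s ∣ d := by
    intro s g d hg h
    exact hxp.pow_dvd_of_dvd_mul_left s hg h
  have canc : ∀ (s : ℕ) (g e : R), ¬ x ∣ g → g ∣ x ^ s * e → g ∣ e := by
    intro s g e hg ⟨d, hd⟩
    obtain ⟨d', rfl⟩ := hpow s g d hg ⟨e, hd.symm⟩
    refine ⟨d', mul_left_cancel₀ (pow_ne_zero s hx0) ?_⟩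
    rw [hd]; ring
  have key : ∀ c g f : R, ¬ x ∣ c → ¬ x ∣ g → (∀ m : ℕ, g ^ m ∣ c * f ^ m) → g ∣ f := by
    intro c g f hc hg H
    have step : ∀ h : R, (∀ m : ℕ, g ^ m ∣ c * h ^ m) →
        ∃ a h', h = g * a + x * h' := by
      intro h H
      have : φ g ∣ φ h := by
        apply aux_alm (φ c) (φ g) (φ h) (by rwa [Ne, hk]) (by rwa [Ne, hk])
        intro m
        rw [← map_pow, ← map_pow, ← map_mul]
        exact map_dvd φ (H m)
      obtain ⟨y, hy⟩ := this
      obtain ⟨a, rfl⟩ := hφ y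
      have : φ (h - g * a) = 0 := by rw [map_sub, map_mul, hy, sub_self]
      obtain ⟨h', hh⟩ := (hk _).1 this
      exact ⟨a, h', by rw [← hh]; ring⟩
    have main : ∀ n : ℕ, ∃ a h, f = g * a + x ^ n * h ∧ (∀ m : ℕ, g ^ m ∣ c * h ^ m) := by
      intro n
      induction n with
      | zero => exact ⟨0, f, by simp, H⟩
      | succ n ih =>
        obtain ⟨a, h, hf, hh⟩ := ih
        obtain ⟨a', h', rfl⟩ := step h hh
        refine ⟨a + x ^ n * a', h', by rw [hf]; ring, fun m => ?_⟩
        have h1 : g ^ m ∣ c * (x * h') ^ m := by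
          have : x * h' = (g * a' + x * h') + (- (g * a')) := by ring
          rw [this, add_pow, Finset.mul_sum]
          apply Finset.dvd_sum
          intro i hi
          have hi' : i ≤ m := by simpa [Nat.lt_succ_iff] using hi
          have e : g ^ m = g ^ i * g ^ (m - i) := by rw [← pow_add]; congr 1; omega
          rw [e, ← mul_assoc, ← mul_assoc]
          apply Dvd.dvd.mul_right
          apply mul_dvd_mul (hh i)
          exact pow_dvd_pow_of_dvd ((dvd_mul_right g a').neg_right) _
        exact canc m (g ^ m) _ (fun h => hg (hxp.dvd_of_dvd_pow h)) (by
          rw [mul_pow] at h1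
          convert h1 using 1; ring)
    have hK := Ideal.iInf_pow_smul_eq_bot_of_le_jacobson (M := R ⧸ Ideal.span {g}) _ hj
    have h2 : Ideal.Quotient.mk (Ideal.span {g}) f ∈
        (⨅ i : ℕ, Ideal.span {x} ^ i • (⊤ : Submodule R (R ⧸ Ideal.span {g}))) := by
      rw [Submodule.mem_iInf]
      intro i
      obtain ⟨a, h, hf, -⟩ := main i
      have : Ideal.Quotient.mk (Ideal.span {g}) f = x ^ i • Ideal.Quotient.mk (Ideal.span {g}) h := by
        rw [← sub_eq_zero, Algebra.smul_def, Ideal.Quotient.algebraMap_eq, ← map_mul, ← map_sub,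
          Ideal.Quotient.eq_zero_iff_mem, Ideal.mem_span_singleton]
        exact ⟨a, by rw [hf]; ring⟩
      rw [this]
      exact Submodule.smul_mem_smul (Ideal.pow_mem_pow (Ideal.mem_span_singleton_self x) i) trivial
    rw [hK, Submodule.mem_bot, Ideal.Quotient.eq_zero_iff_mem, Ideal.mem_span_singleton] at h2
    exact h2
  have key2 : ∀ c g f : R, c ≠ 0 → ¬ x ∣ g → (∀ m : ℕ, g ^ m ∣ c * f ^ m) → g ∣ f := by
    intro c g f hc hg H
    obtain ⟨s, c', rfl, hc'⟩ := aux_fact x hj c hc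
    refine key c' g f hc' hg fun m => ?_
    exact canc s (g ^ m) _ (fun h => hg (hxp.dvd_of_dvd_pow h)) (by rw [← mul_assoc]; exact H m)
  have key3 : ∀ c g f : R, c ≠ 0 → g ≠ 0 → (∀ m : ℕ, g ^ m ∣ c * f ^ m) → g ∣ f := by
    intro c g f hc hg H
    obtain ⟨s, g, rfl, hg'⟩ := aux_fact x hj g hg
    have hg0 : g ≠ 0 := by rintro rfl; simp at hg'
    obtain ⟨a, rfl⟩ : g ∣ f := key2 c g f hc hg' fun m =>
      (pow_dvd_pow_of_dvd (dvd_mul_left _ _) m).trans (H m)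
    rw [mul_comm g a]
    apply mul_dvd_mul_right
    rcases eq_or_ne a 0 with rfl | ha
    · simp
    obtain ⟨r, a, rfl, ha'⟩ := aux_fact x hj a ha
    obtain ⟨q, c, rfl, hc'⟩ := aux_fact x hj c hc
    rcases le_or_gt s r with hsr | hsr
    · exact (pow_dvd_pow x hsr).mul_right a
    exfalso
    have h1 := H (q + 1)
    rw [mul_pow, mul_pow, mul_comm ((x ^ s) ^ (q+1)), mul_left_comm] at h1
    have h2 := (mul_dvd_mul_iff_left (pow_ne_zero _ hg0)).1 h1
    rw [mul_pow, ← pow_mul, ← pow_mul] at h2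
    have h3 : x ^ (q + r * (q + 1) + 1) ∣ x ^ (q + r * (q + 1)) * (c * a ^ (q + 1)) := by
      refine (pow_dvd_pow x ?_).trans (h2.trans (dvd_of_eq (by ring)))
      nlinarith
    rw [pow_succ] at h3
    have h4 := (mul_dvd_mul_iff_left (pow_ne_zero _ hx0)).1 h3
    rcases hxp.dvd_or_dvd h4 with h | h
    · exact hc' h
    · exact ha' (hxp.dvd_of_dvd_pow h)
  let K := FractionRing R
  rw [isIntegrallyClosed_iff K]
  intro y hy
  obtain ⟨c, hc, H⟩ := hy.isAlmostIntegral
  obtain ⟨f, g, hg, rfl⟩ := IsFractionRing.div_surjective (A := R) y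
  have hg0 : g ≠ 0 := nonZeroDivisors.ne_zero hg
  have hgK : algebraMap R K g ≠ 0 := by simpa using hg0
  obtain ⟨a, rfl⟩ := key3 c g f (nonZeroDivisors.ne_zero hc) hg0 fun m => by
    obtain ⟨d, hd⟩ := H m
    refine ⟨d, ?_⟩
    rw [Algebra.smul_def, div_pow, ← mul_div_assoc, eq_div_iff (pow_ne_zero _ hgK),
      ← map_pow, ← map_pow, ← map_mul, ← map_mul] at hd
    rw [mul_comm (g ^ m)]
    exact (IsFractionRing.injective R K hd).symm
  exact ⟨a, by rw [map_mul, mul_div_cancel_left₀ _ hgK]⟩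
end

section
open RingTheory.Sequence

/-- The ideal generated by the first `i` members of a sequence. -/
abbrev AuxJ {R : Type*} [CommRing R] (v : ℕ → R) (i : ℕ) : Ideal R := Ideal.span (v '' Set.Iio i)

/-- The first `N` members of `v` form a weakly regular sequence. -/
def AuxWR {R : Type*} [CommRing R] (v : ℕ → R) (N : ℕ) : Prop :=
  ∀ i < N, ∀ a, v i * a ∈ AuxJ v i → a ∈ AuxJ v i

theorem auxJ_succ {R : Type*} [CommRing R] (v : ℕ → R) (i : ℕ) :
    AuxJ v (i + 1) = AuxJ v i ⊔ Ideal.span {v i} := by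
  suffices h : v '' Set.Iio (i + 1) = v '' Set.Iio i ∪ {v i} by
    unfold AuxJ
    rw [← Ideal.span_union, h]
  ext y
  simp only [Set.mem_image, Set.mem_Iio, Set.mem_union, Set.mem_singleton_iff]
  constructor
  · rintro ⟨j, hj, rfl⟩
    rcases Nat.lt_succ_iff_lt_or_eq.1 hj with h | rfl
    · exact Or.inl ⟨j, h, rfl⟩
    · exact Or.inr rfl
  · rintro (⟨j, hj, rfl⟩ | rfl)
    · exact ⟨j, by omega, rfl⟩
    · exact ⟨i, by omega, rfl⟩

theorem auxJ_map {R S : Type*} [CommRing R] [CommRing S] (f : R →+* S) (v : ℕ → R) (i : ℕ) :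
    (AuxJ v i).map f = AuxJ (fun j => f (v j)) i := by
  rw [Ideal.map_span, Set.image_image]

theorem auxWR_iff {R : Type*} [CommRing R] (v : ℕ → R) (N : ℕ) :
    AuxWR v N ↔ IsWeaklyRegular R ((List.range N).map v) := by
  have h1 : ∀ i < N, (Ideal.ofList (List.take i (List.map v (List.range N))) • ⊤ : Submodule R R) =
      AuxJ v i := by
    intro i hi
    rw [smul_eq_mul, Ideal.mul_top, ← List.map_take, List.take_range, min_eq_left hi.le]
    unfold Ideal.ofList
    congr 1
    ext y
    simp
  have h3 : ∀ i (hi : i < ((List.range N).map v).length), (IsSMulRegular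
      (R ⧸ (Ideal.ofList (List.take i (List.map v (List.range N))) • ⊤ : Submodule R R))
      ((List.range N).map v)[i] ↔ ∀ a, v i * a ∈ AuxJ v i → a ∈ AuxJ v i) := by
    intro i hi
    have hi' : i < N := by simpa using hi
    have h2 : ((List.range N).map v)[i] = v i := by simp
    rw [h1 i hi', h2, isSMulRegular_quotient_iff_mem_of_smul_mem]
    rfl
  rw [isWeaklyRegular_iff]
  constructor
  · intro h i hi
    exact (h3 i hi).2 (h i (by simpa using hi))
  · intro h i hi
    have hi' : i < ((List.range N).map v).length := by simpa using hi
    exact (h3 i hi').1 (h i hi')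

theorem auxWR_flat {R S : Type*} [CommRing R] [CommRing S] [Algebra R S] [Module.Flat R S]
    (v : ℕ → R) (N : ℕ) (h : AuxWR v N) : AuxWR (fun j => algebraMap R S (v j)) N := by
  rw [auxWR_iff] at h ⊢
  have := h.of_flat (S := S)
  rwa [List.map_map] at this

theorem aux_chain {R : Type*} [CommRing R] [IsNoetherianRing R] (v : ℕ → R) (N : ℕ)
    (hw : AuxWR v N) (hj : AuxJ v N ≤ Ideal.jacobson ⊥)
    (hd : IsDomain (R ⧸ AuxJ v N)) (hn : IsIntegrallyClosed (R ⧸ AuxJ v N)) :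
    ∀ i ≤ N, IsDomain (R ⧸ AuxJ v i) ∧ IsIntegrallyClosed (R ⧸ AuxJ v i) := by
  intro i hi
  induction hi using Nat.decreasingInduction with
  | self => exact ⟨hd, hn⟩
  | of_succ i hi ih =>
    obtain ⟨h1, h2⟩ := ih
    have hle : AuxJ v i ≤ AuxJ v (i + 1) := by rw [auxJ_succ]; exact le_sup_left
    refine aux_normal (Ideal.Quotient.factor hle) (Ideal.Quotient.factor_surjective hle)
      (Ideal.Quotient.mk _ (v i)) ?_ ?_ ?_
    · intro a
      obtain ⟨a, rfl⟩ := Ideal.Quotient.mk_surjective a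
      rw [Ideal.Quotient.factor_mk, Ideal.Quotient.eq_zero_iff_mem, auxJ_succ]
      constructor
      · intro h
        obtain ⟨b, hb, c, hc, rfl⟩ := Submodule.mem_sup.1 h
        obtain ⟨d, rfl⟩ := Ideal.mem_span_singleton.1 hc
        rw [map_add, Ideal.Quotient.eq_zero_iff_mem.2 hb, zero_add, map_mul]
        exact dvd_mul_right _ _
      · rintro ⟨d, hd⟩
        obtain ⟨d, rfl⟩ := Ideal.Quotient.mk_surjective d
        rw [← map_mul, Ideal.Quotient.eq] at hd
        have : a = (a - v i * d) + v i * d := by ring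
        rw [this]
        exact Submodule.add_mem_sup hd (Ideal.mem_span_singleton.2 (dvd_mul_right _ _))
    · rw [isSMulRegular_iff_right_eq_zero_of_smul]
      intro a ha
      obtain ⟨a, rfl⟩ := Ideal.Quotient.mk_surjective a
      rw [smul_eq_mul, ← map_mul, Ideal.Quotient.eq_zero_iff_mem] at ha
      rw [Ideal.Quotient.eq_zero_iff_mem]
      exact hw i hi a ha
    · rw [Ideal.span_singleton_le_iff_mem, Ideal.mem_jacobson_bot]
      intro y
      obtain ⟨y, rfl⟩ := Ideal.Quotient.mk_surjective y
      have : v i ∈ Ideal.jacobson (⊥ : Ideal R) :=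
        hj (Ideal.subset_span ⟨i, hi, rfl⟩)
      have h := (Ideal.mem_jacobson_bot.1 this y).map (Ideal.Quotient.mk (AuxJ v i))
      simpa using h

theorem aux_transfer {R S : Type*} [CommRing R] [CommRing S] (e : R ≃+* S)
    (h : IsDomain R ∧ IsIntegrallyClosed R) : IsDomain S ∧ IsIntegrallyClosed S := by
  obtain ⟨h1, h2⟩ := h
  exact ⟨e.symm.toMulEquiv.isDomain R, IsIntegrallyClosed.of_equiv e⟩

theorem aux_step {R : Type*} [CommRing R] [IsNoetherianRing R] (v : ℕ → R) (N s : ℕ) (hs : s < N)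
    (hw : AuxWR v N) (hd : IsDomain (R ⧸ AuxJ v s)) (hn : IsIntegrallyClosed (R ⧸ AuxJ v s))
    (I : Ideal (Localization.Away (v s)))
    (hI : I = (AuxJ v s).map (algebraMap R (Localization.Away (v s)))) :
    IsNoetherianRing (AdicCompletion I (Localization.Away (v s))) ∧
    AuxWR (fun j => algebraMap (Localization.Away (v s)) (AdicCompletion I (Localization.Away (v s)))
      (algebraMap R (Localization.Away (v s)) (v j))) N ∧
    ∀ i ≤ s, IsDomain (AdicCompletion I (Localization.Away (v s)) ⧸
      AuxJ (fun j => algebraMap (Localization.Away (v s)) (AdicCompletion I (Localization.Away (v s)))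
        (algebraMap R (Localization.Away (v s)) (v j))) i) ∧
      IsIntegrallyClosed (AdicCompletion I (Localization.Away (v s)) ⧸
      AuxJ (fun j => algebraMap (Localization.Away (v s)) (AdicCompletion I (Localization.Away (v s)))
        (algebraMap R (Localization.Away (v s)) (v j))) i) := by
  have hN' : IsNoetherianRing (Localization.Away (v s)) :=
    IsLocalization.isNoetherianRing (Submonoid.powers (v s)) _ inferInstance
  have hA : IsNoetherianRing (AdicCompletion I (Localization.Away (v s))) := aux_noeth I
  have hfg : I.FG := (isNoetherianRing_iff_ideal_fg _).1 hN' I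
  have hfl : Module.Flat R (Localization.Away (v s)) :=
    IsLocalization.flat _ (Submonoid.powers (v s))
  have hw1 := auxWR_flat (S := Localization.Away (v s)) v N hw
  have hw2 := auxWR_flat (S := AdicCompletion I (Localization.Away (v s))) _ N hw1
  refine ⟨hA, hw2, ?_⟩
  have hJ : AuxJ (fun j => algebraMap (Localization.Away (v s))
      (AdicCompletion I (Localization.Away (v s)))
        (algebraMap R (Localization.Away (v s)) (v j))) s =
      I.map (algebraMap (Localization.Away (v s)) (AdicCompletion I (Localization.Away (v s)))) := by
    have : ∀ (K : Ideal (Localization.Away (v s))),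
       K = (AuxJ v s).map (algebraMap R (Localization.Away (v s))) →
       AuxJ (fun j => algebraMap (Localization.Away (v s))
        (AdicCompletion I (Localization.Away (v s)))
          (algebraMap R (Localization.Away (v s)) (v j))) s =
        K.map (algebraMap (Localization.Away (v s)) (AdicCompletion I (Localization.Away (v s)))) := by
      rintro K rfl
      rw [auxJ_map, auxJ_map]
    exact this I hI
  have hc : IsAdicComplete (I.map (algebraMap (Localization.Away (v s))
      (AdicCompletion I (Localization.Away (v s))))) (AdicCompletion I (Localization.Away (v s))) :=
    (IsAdicComplete.map_algebraMap_iff _ _).mpr (AdicCompletion.isAdicComplete hfg)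
  -- the localised quotient
  have hq : IsDomain (Localization.Away (v s) ⧸ I) ∧
      IsIntegrallyClosed (Localization.Away (v s) ⧸ I) := by
    rw [hI]
    have hvs : Ideal.Quotient.mk (AuxJ v s) (v s) ≠ 0 := by
      intro h
      rw [Ideal.Quotient.eq_zero_iff_mem] at h
      have h1 : (1 : R) ∈ AuxJ v s := hw s hs 1 (by simpa using h)
      have h2 : (1 : R ⧸ AuxJ v s) = 0 := by
        rw [← map_one (Ideal.Quotient.mk (AuxJ v s)), Ideal.Quotient.eq_zero_iff_mem]
        exact h1
      exact one_ne_zero h2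
    have hM : Algebra.algebraMapSubmonoid (R ⧸ AuxJ v s) (Submonoid.powers (v s)) ≤
        nonZeroDivisors (R ⧸ AuxJ v s) := by
      rintro _ ⟨_, ⟨m, rfl⟩, rfl⟩
      apply mem_nonZeroDivisors_of_ne_zero
      simpa using fun h => absurd h hvs
    exact ⟨IsLocalization.isDomain_of_le_nonZeroDivisors _ hM,
      isIntegrallyClosed_of_isLocalization _ _ hM⟩
  have hq2 := aux_transfer ((RingHom.quotientKerEquivOfSurjective
    (f := (AdicCompletion.evalOneₐ I).toRingHom) (AdicCompletion.evalOneₐ_surjective I)).symm.trans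
    (Ideal.quotEquivOfEq ((AdicCompletion.ker_evalOneₐ_eq_map I hfg).trans hJ.symm))) hq
  exact aux_chain _ s (fun i hi => hw2 i (hi.trans hs))
    (hJ ▸ IsAdicComplete.le_jacobson_bot _) hq2.1 hq2.2
end

section
variable (p : ℕ) [hp : Fact p.Prime] (k : Type*)

theorem auxE_mem [CommRing k] (n s : ℕ) (hs : s ≤ n - 1)
    (f : MvPowerSeries (Fin (n - 1)) (WittVector p k)) :
    f ∈ AuxJ (MoravaGen p k n) (s + 1) ↔
      ∀ m : Fin (n - 1) →₀ ℕ, (∀ j : Fin (n - 1), j.val < s → m j = 0) →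
        (p : WittVector p k) ∣ MvPowerSeries.coeff m f := by
  have hC : (p : MvPowerSeries (Fin (n - 1)) (WittVector p k)) =
      MvPowerSeries.C (p : WittVector p k) := by simp
  induction s generalizing f with
  | zero =>
    have : AuxJ (MoravaGen p k n) (0 + 1) = Ideal.span {MvPowerSeries.C (p : WittVector p k)} := by
      rw [auxJ_succ]
      simp [AuxJ, MoravaGen]
    rw [this, Ideal.mem_span_singleton]
    constructor
    · rintro ⟨g, rfl⟩ m -
      rw [MvPowerSeries.coeff_C_mul]
      exact dvd_mul_right _ _
    · intro h
      choose g hg using fun m => h m (by simp)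
      let G : MvPowerSeries (Fin (n - 1)) (WittVector p k) := g
      have hG : ∀ m, MvPowerSeries.coeff m G = g m := fun m => rfl
      refine ⟨G, ?_⟩
      ext1 m
      rw [MvPowerSeries.coeff_C_mul, hg m, hG]
  | succ s ih =>
    have hs' : s < n - 1 := hs
    have ih := fun f => ih (by omega) f
    have hgen : MoravaGen p k n (s + 1) = MvPowerSeries.X ⟨s, hs'⟩ := by
      simp [MoravaGen, hs']
    rw [auxJ_succ, hgen]
    constructor
    · intro h m hm
      obtain ⟨b, hb, c, hc, rfl⟩ := Submodule.mem_sup.1 h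
      rw [Ideal.mem_span_singleton, MvPowerSeries.X_dvd_iff] at hc
      rw [map_add, hc m (hm ⟨s, hs'⟩ (by simp)), add_zero]
      exact (ih b).1 hb m (fun j hj => hm j (by omega))
    · intro h
      classical
      let f0 : MvPowerSeries (Fin (n - 1)) (WittVector p k) :=
        fun m => if m ⟨s, hs'⟩ = 0 then MvPowerSeries.coeff m f else 0
      have hf0 : ∀ m, MvPowerSeries.coeff m f0 =
        if m ⟨s, hs'⟩ = 0 then MvPowerSeries.coeff m f else 0 := fun m => rfl
      have e : f = f0 + (f - f0) := by ring
      rw [e]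
      apply Submodule.add_mem_sup
      · refine (ih f0).2 ?_
        intro m hm
        rw [hf0]
        split_ifs with h0
        · apply h
          intro j hj
          rcases Nat.lt_succ_iff_lt_or_eq.1 hj with h' | h'
          · exact hm j h'
          · have : j = ⟨s, hs'⟩ := Fin.ext h'
            rw [this, h0]
        · exact dvd_zero _
      · rw [Ideal.mem_span_singleton, MvPowerSeries.X_dvd_iff]
        intro m hm
        rw [map_sub, hf0, if_pos hm, sub_self]

theorem auxE_wr [Field k] [CharP k p] [PerfectRing k p] (n : ℕ) (hn : 1 ≤ n) :
    AuxWR (MoravaGen p k n) n := by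
  intro i hi a ha
  rcases i with _ | s
  · have : AuxJ (MoravaGen p k n) 0 = ⊥ := by simp [AuxJ]
    rw [this, Ideal.mem_bot] at ha ⊢
    have hC : MoravaGen p k n 0 = MvPowerSeries.C (p : WittVector p k) := by simp [MoravaGen]
    rw [hC] at ha
    ext1 m
    have := congrArg (MvPowerSeries.coeff m) ha
    rw [MvPowerSeries.coeff_C_mul, map_zero, mul_eq_zero] at this
    rw [map_zero]
    exact this.resolve_left (WittVector.p_nonzero p k)
  · have hs' : s < n - 1 := by omega
    have hgen : MoravaGen p k n (s + 1) = MvPowerSeries.X ⟨s, hs'⟩ := by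
      simp [MoravaGen, hs']
    rw [auxE_mem p k n s hs'.le] at ha ⊢
    intro m hm
    have := ha (Finsupp.single ⟨s, hs'⟩ 1 + m) (fun j hj => by
      have : (⟨s, hs'⟩ : Fin (n - 1)) ≠ j := by rintro rfl; simp at hj
      simp [hm j hj, this])
    rw [hgen, MvPowerSeries.X_def, MvPowerSeries.coeff_add_monomial_mul, one_mul] at this
    exact this

theorem auxE_normal [Field k] [CharP k p] [PerfectRing k p] (n : ℕ) (hn : 1 ≤ n) :
    ∀ i ≤ n, IsDomain (_ ⧸ AuxJ (MoravaGen p k n) i) ∧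
      IsIntegrallyClosed (_ ⧸ AuxJ (MoravaGen p k n) i) := by
  have hJ : AuxJ (MoravaGen p k n) n =
      (IsLocalRing.maximalIdeal (WittVector p k)).comap MvPowerSeries.constantCoeff := by
    obtain ⟨s, rfl⟩ : ∃ s, n = s + 1 := ⟨n - 1, by omega⟩
    ext f
    rw [auxE_mem p k (s + 1) s (by simp), Ideal.mem_comap,
      (WittVector.irreducible p).maximalIdeal_eq, Ideal.mem_span_singleton,
      ← MvPowerSeries.coeff_zero_eq_constantCoeff_apply]
    constructor
    · intro h
      exact h 0 (by simp)
    · intro h m hm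
      have : m = 0 := by
        ext j
        exact hm j (by omega)
      rwa [this]
  have hmax : (AuxJ (MoravaGen p k n) n).IsMaximal := by
    rw [hJ]
    exact Ideal.comap_isMaximal_of_surjective _ (fun c => ⟨MvPowerSeries.C c, by simp⟩)
  let _ := Ideal.Quotient.field (AuxJ (MoravaGen p k n) n)
  apply aux_chain _ n (auxE_wr p k n hn)
  · rw [IsLocalRing.jacobson_eq_maximalIdeal ⊥ bot_ne_top, IsLocalRing.eq_maximalIdeal hmax]
  · infer_instance
  · infer_instance
end

/-- For `0 ≤ t' ≤ t < n`, the ring `L_{t',t} = π₀ L_{K(t')} L_{K(t)} E_n` is a Noetherian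
integrally closed integral domain. -/
theorem Ltt_is_noetherian_normal_domain (p : ℕ) [Fact p.Prime] (k : Type*) [Field k]
    [CharP k p] [PerfectField k] (n : ℕ) (hn : 1 ≤ n) (t' t : ℕ) (ht' : t' ≤ t)
    (ht : t < n) :
    IsNoetherianRing (MoravaLtt p k n t' t) ∧ IsDomain (MoravaLtt p k n t' t) ∧
      IsIntegrallyClosed (MoravaLtt p k n t' t) := by
  have : ExpChar k p := ExpChar.prime Fact.out
  have : PerfectRing k p := PerfectField.toPerfectRing p
  have hE := auxE_normal p k n hn t ht.le
  obtain ⟨h1, h2, h3⟩ := aux_step (MoravaGen p k n) n t ht (auxE_wr p k n hn) hE.1 hE.2 _ rfl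
  have h4 := h3 t' ht'
  obtain ⟨k1, k2, k3⟩ := aux_step (R := MoravaLt p k n t)
    (fun j => MoravaLtMap p k n t (MoravaGen p k n j)) n t' (lt_of_le_of_lt ht' ht)
    h2 h4.1 h4.2 (Ideal.map
      ((algebraMap (MoravaLt p k n t)
          (Localization.Away (MoravaLtMap p k n t (MoravaGen p k n t')))).comp
        (MoravaLtMap p k n t))
      (Ideal.span (MoravaGen p k n '' Set.Iio t'))) (by
      rw [← Ideal.map_map]
      congr 1
      exact auxJ_map _ _ _)
  refine ⟨k1, ?_⟩
  have h5 := k3 0 (Nat.zero_le _)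
  refine aux_transfer ?_ h5
  refine (Ideal.quotEquivOfEq ?_).trans (RingEquiv.quotientBot _)
  simp [AuxJ]
end

section
/- Let p be a prime, k a perfect field of characteristic p, n ≥ 1, and R = 𝕎(k)⟦u_1, …, u_{n−1}⟧, with the convention u_0 = p, and for 0 ≤ t < n let I_t = (u_0, u_1, …, u_{t−1}) ⊂ R. If M is a flat R-module, then the I_t-adic completion of the localized module M[u_t^{−1}] = M ⊗_R R[u_t^{−1}] is a flat R-module. -/
namespace MoravaFlat

open TensorProduct

universe u v w

variable {R : Type u} [CommRing R] (I : Ideal R)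

/-- Artin-Rees property of a linear map with respect to `I`. -/
def AR {A : Type*} {B : Type*} [AddCommGroup A] [Module R A] [AddCommGroup B] [Module R B]
    (f : A →ₗ[R] B) : Prop :=
  ∃ c : ℕ, ∀ n : ℕ, ∀ y : A, f y ∈ (I ^ (n + c) • ⊤ : Submodule R B) →
    ∃ y' ∈ (I ^ n • ⊤ : Submodule R A), f y' = f y

/-- A linear map of finite modules over a Noetherian ring keeps the Artin-Rees property after
tensoring with a flat module. -/
theorem ar_rTensor [IsNoetherianRing R] {A B : Type*} [AddCommGroup A] [Module R A]
    [AddCommGroup B] [Module R B] [Module.Finite R B] (g : A →ₗ[R] B)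
    (N : Type*) [AddCommGroup N] [Module R N] [Module.Flat R N] : AR I (g.rTensor N) := by
  obtain ⟨c, hc⟩ := Ideal.exists_pow_inf_eq_pow_smul I (LinearMap.range g)
  refine ⟨c, fun n y hy => ?_⟩
  set q := (I ^ (n + c) • ⊤ : Submodule R B).mkQ with hq
  have hex := Module.Flat.rTensor_exact N (LinearMap.exact_subtype_ker_map (q ∘ₗ g))
  have h0 : (q ∘ₗ g).rTensor N y = 0 := by
    rw [LinearMap.rTensor_comp, LinearMap.comp_apply]
    generalize g.rTensor N y = z at hy
    refine Submodule.smul_induction_on hy ?_ ?_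
    · intro r hr z _
      induction z with
      | zero => simp
      | add a b ha hb => rw [smul_add, map_add, ha trivial, hb trivial, add_zero]
      | tmul b m =>
        rw [smul_tmul', LinearMap.rTensor_tmul]
        have : q (r • b) = 0 := by
          rw [hq, Submodule.mkQ_apply, Submodule.Quotient.mk_eq_zero]
          exact Submodule.smul_mem_smul hr trivial
        rw [this, zero_tmul]
    · intro a b ha hb
      rw [map_add, ha, hb, add_zero]
  obtain ⟨z, rfl⟩ := (hex y).mp h0
  clear hy h0
  induction z with
  | zero => exact ⟨0, Submodule.zero_mem _, by simp⟩
  | add a b ha hb =>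
    obtain ⟨a', ha', ha⟩ := ha
    obtain ⟨b', hb', hb⟩ := hb
    exact ⟨a' + b', Submodule.add_mem _ ha' hb', by simp only [map_add, ha, hb]⟩
  | tmul a m =>
    obtain ⟨a, ha⟩ := a
    have h1 : g a ∈ (I ^ (n + c) • ⊤ : Submodule R B) ⊓ LinearMap.range g := by
      refine ⟨?_, ⟨a, rfl⟩⟩
      simpa [hq] using ha
    rw [hc (n + c) (by omega), Nat.add_sub_cancel] at h1
    have h2 : g a ∈ I ^ n • LinearMap.range g :=
      (smul_mono_right _ inf_le_right :
        I ^ n • (I ^ c • ⊤ ⊓ LinearMap.range g) ≤ I ^ n • LinearMap.range g) h1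
    rw [LinearMap.range_eq_map, ← Submodule.map_smul''] at h2
    obtain ⟨b, hb, hba⟩ := h2
    refine ⟨b ⊗ₜ m, ?_, by simp [hba]⟩
    have : Submodule.map ((TensorProduct.mk R A N).flip m) (I ^ n • ⊤) ≤ I ^ n • ⊤ := by
      rw [Submodule.map_smul'']
      exact smul_mono_right _ le_top
    exact this ⟨b, hb, rfl⟩

theorem map_exact_of_ar {A B C : Type*} [AddCommGroup A] [Module R A]
    [AddCommGroup B] [Module R B] [AddCommGroup C] [Module R C]
    {f : A →ₗ[R] B} {g : B →ₗ[R] C} (hfg : Function.Exact f g) (hf : AR I f) (hg : AR I g)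
    (x : AdicCompletion I B) (hx : AdicCompletion.map I g x = 0) :
    ∃ z, AdicCompletion.map I f z = x := by
  obtain ⟨cf, hf⟩ := hf
  obtain ⟨cg, hg⟩ := hg
  obtain ⟨x, rfl⟩ := AdicCompletion.mk_surjective I B x
  have hb (n : ℕ) : g (x n) ∈ (I ^ n • ⊤ : Submodule R C) := by
    simpa using congrArg (fun x ↦ x.val n) hx
  have hmono (P : Type _) [AddCommGroup P] [Module R P] {m n : ℕ} (h : m ≤ n) :
      (I ^ n • ⊤ : Submodule R P) ≤ I ^ m • ⊤ :=
    Submodule.smul_mono_left (Ideal.pow_le_pow_right h)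
  have hxx {m n : ℕ} (h : m ≤ n) : x n - x m ∈ (I ^ m • ⊤ : Submodule R B) := by
    rw [← Submodule.Quotient.eq]
    exact AdicCompletion.AdicCauchySequence.mk_eq_mk h x
  have h1 (n : ℕ) : ∃ y, f y - x n ∈ (I ^ n • ⊤ : Submodule R B) := by
    obtain ⟨d, hd, hgd⟩ := hg n (x (n + cg)) (hb _)
    obtain ⟨y, hy⟩ := (hfg (x (n + cg) - d)).mp (by rw [map_sub, hgd, sub_self])
    refine ⟨y, ?_⟩
    rw [hy, sub_right_comm]
    exact Submodule.sub_mem _ (hxx (by omega)) hd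
  choose y hy using h1
  have h2 (n : ℕ) : ∃ e ∈ (I ^ n • ⊤ : Submodule R A),
      f e = f (y (n + 1 + cf) - y (n + cf)) := by
    refine hf n _ ?_
    have e1 := hmono B (show n + cf ≤ n + 1 + cf by omega) (hy (n + 1 + cf))
    have e2 := hy (n + cf)
    have e3 := hxx (show n + cf ≤ n + 1 + cf by omega)
    have := Submodule.add_mem _ (Submodule.sub_mem _ e1 e2) e3
    convert this using 1
    rw [map_sub]
    abel
  choose e he hfe using h2
  let z : ℕ → A := fun n => y cf + ∑ i ∈ Finset.range n, e i
  have hz (n : ℕ) : f (z n) = f (y (n + cf)) := by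
    induction n with
    | zero => simp [z]
    | succ n ih =>
      have : z (n + 1) = z n + e n := by simp [z, Finset.sum_range_succ, add_assoc]
      rw [this, map_add, ih, hfe, map_sub]
      abel
  refine ⟨AdicCompletion.mk I A (AdicCompletion.AdicCauchySequence.mk I A z ?_), ?_⟩
  · intro n
    rw [SModEq.comm, SModEq.sub_mem]
    have : z (n + 1) - z n = e n := by simp [z, Finset.sum_range_succ]
    rw [this]
    exact he n
  · refine AdicCompletion.ext fun n => ?_
    have key : f (z n) - x n ∈ (I ^ n • ⊤ : Submodule R B) := by
      have e1 := hmono B (show n ≤ n + cf by omega) (hy (n + cf))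
      have e2 := hxx (show n ≤ n + cf by omega)
      rw [hz]
      simpa using Submodule.add_mem _ e1 e2
    exact (Submodule.Quotient.eq _).mpr key

theorem map_add' {A B : Type*} [AddCommGroup A] [Module R A]
    [AddCommGroup B] [Module R B] (f g : A →ₗ[R] B) (x : AdicCompletion I A) :
    AdicCompletion.map I (f + g) x = AdicCompletion.map I f x + AdicCompletion.map I g x := by
  obtain ⟨x, rfl⟩ := AdicCompletion.mk_surjective I A x
  exact AdicCompletion.ext fun n => rfl

theorem map_smul' {A B : Type*} [AddCommGroup A] [Module R A]
    [AddCommGroup B] [Module R B] (r : R) (f : A →ₗ[R] B) (x : AdicCompletion I A) :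
    AdicCompletion.map I (r • f) x = r • AdicCompletion.map I f x := by
  obtain ⟨x, rfl⟩ := AdicCompletion.mk_surjective I A x
  exact AdicCompletion.ext fun n => rfl

theorem map_sum' {A B ι : Type*} [AddCommGroup A] [Module R A]
    [AddCommGroup B] [Module R B] (s : Finset ι) (f : ι → A →ₗ[R] B) (x : AdicCompletion I A) :
    AdicCompletion.map I (∑ i ∈ s, f i) x = ∑ i ∈ s, AdicCompletion.map I (f i) x := by
  classical
  induction s using Finset.induction_on with
  | empty => simp
  | insert a s ha ih => rw [Finset.sum_insert ha, Finset.sum_insert ha, map_add', ih]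

theorem flat_adicCompletion [IsNoetherianRing R] (N : Type*) [AddCommGroup N] [Module R N]
    [Module.Flat R N] : Module.Flat R (AdicCompletion I N) := by
  classical
  refine Module.Flat.of_forall_isTrivialRelation fun {l f x} hfx => ?_
  let g : (Fin l → R) →ₗ[R] R := Fintype.linearCombination R f
  obtain ⟨m, k, hk⟩ := Module.Finite.exists_fin' R (LinearMap.ker g)
  let K : (Fin m → R) →ₗ[R] (Fin l → R) := (LinearMap.ker g).subtype ∘ₗ k
  have hKg : Function.Exact K g := by
    rw [LinearMap.exact_iff, LinearMap.range_comp, LinearMap.range_eq_top.mpr hk,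
      Submodule.map_top, Submodule.range_subtype]
  let inc (i : Fin l) : N →ₗ[R] (Fin l → R) ⊗[R] N := TensorProduct.mk R _ N (Pi.single i 1)
  let pr (s : ℕ) (i : Fin s) : (Fin s → R) ⊗[R] N →ₗ[R] N :=
    (TensorProduct.lid R N).toLinearMap ∘ₗ (LinearMap.proj i : (Fin s → R) →ₗ[R] R).rTensor N
  let X : AdicCompletion I ((Fin l → R) ⊗[R] N) := ∑ i, AdicCompletion.map I (inc i) (x i)
  have hX : AdicCompletion.map I (g.rTensor N) X = 0 := by
    have h1 (i : Fin l) : g.rTensor N ∘ₗ inc i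
        = f i • (TensorProduct.lid R N).symm.toLinearMap := by
      ext n
      simp [inc, g, smul_tmul']
    calc _ = ∑ i, AdicCompletion.map I (g.rTensor N ∘ₗ inc i) (x i) := by
            simp only [X, map_sum, AdicCompletion.map_comp_apply]
      _ = AdicCompletion.map I (TensorProduct.lid R N).symm.toLinearMap (∑ i, f i • x i) := by
            rw [map_sum]
            refine Finset.sum_congr rfl fun i _ => ?_
            rw [h1, map_smul', LinearMap.map_smul_of_tower]
      _ = 0 := by rw [hfx, map_zero]
  obtain ⟨Z, hZ⟩ := map_exact_of_ar I (Module.Flat.rTensor_exact N hKg) (ar_rTensor I K N)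
    (ar_rTensor I g N) X hX
  refine ⟨m, fun i j => K (Pi.single j 1) i, fun j => AdicCompletion.map I (pr m j) Z, ?_, ?_⟩
  · intro i
    have h2 : AdicCompletion.map I (pr l i) X = x i := by
      have h3 (j : Fin l) : pr l i ∘ₗ inc j = if j = i then LinearMap.id else 0 := by
        ext n
        by_cases h : j = i
        · subst h; simp [pr, inc]
        · simp [pr, inc, h, Ne.symm h]
      simp only [X, map_sum, AdicCompletion.map_comp_apply, h3]
      rw [Finset.sum_eq_single i]
      · simp
      · intro j _ hj; simp [hj]
      · simp
    rw [← h2, ← hZ, AdicCompletion.map_comp_apply]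
    have h4 : pr l i ∘ₗ K.rTensor N = ∑ j, K (Pi.single j 1) i • pr m j := by
      refine TensorProduct.ext (LinearMap.pi_ext' fun j => ?_)
      ext n
      simp [pr, LinearMap.sum_apply, Pi.single_apply, ite_smul]
    rw [h4, map_sum']
    simp only [map_smul']
  · intro j
    have : g (K (Pi.single j 1)) = 0 := (k (Pi.single j 1)).2
    simpa [g, Fintype.linearCombination_apply, mul_comm] using this

end MoravaFlat

open TensorProduct in
/-- If `M` is a flat module over `R = 𝕎(k)⟦u_1, …, u_{n-1}⟧` and `0 ≤ t < n`, then the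
`I_t`-adic completion of `M[u_t⁻¹] = M ⊗_R R[u_t⁻¹]` is a flat `R`-module, where
`I_t = (u_0, …, u_{t-1})` with `u_0 = p`. -/
theorem adicCompletion_localization_flat (p : ℕ) [Fact p.Prime] (k : Type*) [Field k]
    [CharP k p] [PerfectField k] (n : ℕ) (hn : 1 ≤ n) (t : ℕ) (ht : t < n)
    (M : Type*) [AddCommGroup M] [Module (MvPowerSeries (Fin (n - 1)) (WittVector p k)) M]
    [Module.Flat (MvPowerSeries (Fin (n - 1)) (WittVector p k)) M] :
    Module.Flat (MvPowerSeries (Fin (n - 1)) (WittVector p k))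
      (AdicCompletion (Ideal.span (MoravaGen p k n '' Set.Iio t))
        (M ⊗[MvPowerSeries (Fin (n - 1)) (WittVector p k)]
          Localization.Away (MoravaGen p k n t))) := by
  have : PerfectRing k p := inferInstance
  have : IsNoetherianRing (WittVector p k) := inferInstance
  have : Module.Flat (MvPowerSeries (Fin (n - 1)) (WittVector p k))
      (Localization.Away (MoravaGen p k n t)) :=
    IsLocalization.flat _ (Submonoid.powers (MoravaGen p k n t))
  exact MoravaFlat.flat_adicCompletion _ _
end
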